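/- Let d ≥ 1 and let ρ be a d×d complex Hermitian positive semidefinite matrix with tr(ρ) = 1. Index the tensor factors by the quaternion group Q₈ (the group QuaternionGroup 2 of order 8), and for g ∈ Q₈ let L_g be the left-multiplication permutation x ↦ g·x of Q₈ (the Cayley embedding of Q₈ into S₈). Then (1/8) ∑_{g ∈ Q₈} tr(W(L_g) * ρ^{⊗Q₈}) = (1/8)·(1 + (tr(ρ^2))^4 + 6·(tr(ρ^4))^2). -/

import Mathlib

/-!
The trace of `W(π) ρ^{⊗ι}` is the sum over all colourings `y : ι → Fin d` of
`∏ i, ρ (y i) (y (π i))`. Left multiplication by an element `g` of a finite group `G` splits `G`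
into right cosets of `⟨g⟩`, each being a single cycle of length `orderOf g`; the sum factors over
these cycles, and one cycle of length `m` contributes `tr (ρ ^ m)`. Hence the trace is
`tr (ρ ^ orderOf g) ^ r`, with `r` the number of cosets (`trace_permOp_mulLeft`). The quaternion
group has one element of order 1, one of order 2 and six of order 4.
-/

open Matrix
open scoped ComplexOrder

/-- The `ι`-fold tensor power of a matrix `ρ`, with entries `∏ i, ρ (x i) (y i)`. -/
noncomputable def tensorPow {d : ℕ} (ρ : Matrix (Fin d) (Fin d) ℂ) (ι : Type) [Fintype ι] :
    Matrix (ι → Fin d) (ι → Fin d) ℂ :=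
  Matrix.of fun x y => ∏ i, ρ (x i) (y i)

/-- The permutation operator `W(π)` acting on the tensor factors. -/
def permOp (d : ℕ) {ι : Type} [Fintype ι] [DecidableEq ι] (π : Equiv.Perm ι) :
    Matrix (ι → Fin d) (ι → Fin d) ℂ :=
  Matrix.of fun x y => if x = y ∘ π then 1 else 0

/-- A power of a matrix as a sum over walks: `z` lists the intermediate vertices of a walk of
length `n + 1` from `a` to `b`. -/
lemma pow_succ_apply_eq_sum_walks {d : ℕ} (ρ : Matrix (Fin d) (Fin d) ℂ) (n : ℕ) (a b : Fin d) :
    (ρ ^ (n + 1)) a b =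
      ∑ z : Fin n → Fin d, ∏ s : Fin (n + 1),
        ρ ((Fin.cons a z : Fin (n + 1) → Fin d) s) ((Fin.snoc z b : Fin (n + 1) → Fin d) s) := by
  induction n generalizing a with
  | zero => simp [Fin.snoc]
  | succ n ih =>
    rw [pow_succ', Matrix.mul_apply, ← (Fin.consEquiv fun _ : Fin (n + 1) => Fin d).sum_comp,
      Fintype.sum_prod_type]
    refine Finset.sum_congr rfl fun c _ => ?_
    rw [ih, Finset.mul_sum]
    refine Finset.sum_congr rfl fun z _ => ?_
    rw [Fin.prod_univ_succ (n := n + 1)]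
    simp [Fin.consEquiv, ← Fin.cons_snoc_eq_snoc_cons]

lemma trace_pow_succ_eq_sum_cycles {d : ℕ} (ρ : Matrix (Fin d) (Fin d) ℂ) (n : ℕ) :
    (ρ ^ (n + 1)).trace =
      ∑ z : Fin (n + 1) → Fin d, ∏ s : Fin (n + 1), ρ (z s) (z (s + 1)) := by
  rw [← (Fin.consEquiv fun _ : Fin (n + 1) => Fin d).sum_comp, Fintype.sum_prod_type]
  refine Finset.sum_congr rfl fun a _ => ?_
  rw [Matrix.diag_apply, pow_succ_apply_eq_sum_walks]
  refine Finset.sum_congr rfl fun z _ => Finset.prod_congr rfl fun s _ => ?_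
  congr 1
  induction s using Fin.lastCases with
  | last => simp [Fin.consEquiv]
  | cast i => simp [Fin.consEquiv]

lemma trace_permOp_mul_tensorPow {d : ℕ} (ρ : Matrix (Fin d) (Fin d) ℂ) {ι : Type} [Fintype ι]
    [DecidableEq ι] (π : Equiv.Perm ι) :
    (permOp d π * tensorPow ρ ι).trace = ∑ y : ι → Fin d, ∏ i, ρ (y i) (y (π i)) := by
  simp only [Matrix.trace, Matrix.diag_apply, Matrix.mul_apply, permOp, tensorPow, Matrix.of_apply,
    ite_mul, one_mul, zero_mul]
  rw [Finset.sum_comm]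
  simp

/-- If `π` is conjugated by `e` to a disjoint union of cycles of length `n + 1`, indexed by
`κ`, the trace factors over the cycles. -/
lemma trace_permOp_of_cycles {d : ℕ} (ρ : Matrix (Fin d) (Fin d) ℂ) {ι κ : Type} [Fintype ι]
    [DecidableEq ι] [Fintype κ] (π : Equiv.Perm ι) (n : ℕ) (e : κ × Fin (n + 1) ≃ ι)
    (he : ∀ k s, π (e (k, s)) = e (k, s + 1)) :
    (permOp d π * tensorPow ρ ι).trace = (ρ ^ (n + 1)).trace ^ Fintype.card κ := by
  classical
  rw [trace_permOp_mul_tensorPow, trace_pow_succ_eq_sum_cycles, ← Finset.card_univ,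
    ← Finset.prod_const, Finset.prod_univ_sum, Fintype.piFinset_univ,
    ← ((Equiv.curry κ (Fin (n + 1)) (Fin d)).symm.trans (e.arrowCongr (Equiv.refl _))).sum_comp]
  refine Finset.sum_congr rfl fun z _ => ?_
  rw [← e.prod_comp, Fintype.prod_prod_type]
  simp [he]

/-- The right cosets of the cyclic subgroup generated by `g` are the cycles of `x ↦ g * x`. -/
lemma trace_permOp_mulLeft {d : ℕ} (ρ : Matrix (Fin d) (Fin d) ℂ) {G : Type} [Group G] [Fintype G]
    [DecidableEq G] (g : G) (m r : ℕ) (hm : orderOf g = m) (hr : Fintype.card G = m * r) :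
    (permOp d (Equiv.mulLeft g) * tensorPow ρ G).trace = (ρ ^ m).trace ^ r := by
  classical
  have hpos : 0 < m := hm ▸ orderOf_pos g
  obtain ⟨n, rfl⟩ : ∃ n, m = n + 1 := ⟨m - 1, by omega⟩
  obtain ⟨T, hT, -⟩ := Subgroup.exists_isComplement_right (Subgroup.zpowers g) 1
  have hbij : Function.Bijective fun p : T × Fin (n + 1) => g ^ (p.2 : ℕ) * (p.1 : G) := by
    let f : T × Fin (n + 1) ≃ Subgroup.zpowers g × T :=
      (Equiv.prodComm _ _).trans
        (((finCongr hm.symm).trans (finEquivZPowers (isOfFinOrder_of_finite g))).prodCongr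
          (Equiv.refl _))
    exact hT.comp f.bijective
  let e := Equiv.ofBijective _ hbij
  have hcard : Fintype.card T = r := by
    have h := Fintype.card_congr e
    rw [Fintype.card_prod, Fintype.card_fin, hr, mul_comm] at h
    exact Nat.eq_of_mul_eq_mul_left hpos h
  rw [← hcard]
  refine trace_permOp_of_cycles ρ _ n e fun k s => ?_
  change g * (g ^ (s : ℕ) * (k : G)) = g ^ ((s + 1 : Fin (n + 1)) : ℕ) * (k : G)
  -- Addition in `Fin (n + 1)` wraps around, which is harmless since `g ^ (n + 1) = 1`.
  have hmod (t : ℕ) : g ^ (t % (n + 1)) = g ^ t := by rw [← hm, pow_mod_orderOf]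
  rw [← mul_assoc, ← pow_succ', Fin.val_add, Fin.val_one', Nat.add_mod_mod, hmod]

theorem acceptance_prob_quaternion_group (d : ℕ) (hd : 1 ≤ d)
    (ρ : Matrix (Fin d) (Fin d) ℂ) (hρ : ρ.PosSemidef) (htr : ρ.trace = 1) :
    (1 / 8 : ℂ) *
        ∑ g : QuaternionGroup 2,
          (permOp d (Equiv.mulLeft g) * tensorPow ρ (QuaternionGroup 2)).trace
      = (1 / 8 : ℂ) * (1 + ((ρ ^ 2).trace) ^ 4 + 6 * ((ρ ^ 4).trace) ^ 2) := by
  have hcard : Fintype.card (QuaternionGroup 2) = 8 := QuaternionGroup.card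
  have h1 : (permOp d (Equiv.mulLeft (QuaternionGroup.a 0 : QuaternionGroup 2)) *
      tensorPow ρ (QuaternionGroup 2)).trace = 1 := by
    rw [trace_permOp_mulLeft ρ _ 1 8 (by simp) hcard, pow_one, htr, one_pow]
  have h2 : (permOp d (Equiv.mulLeft (QuaternionGroup.a 2 : QuaternionGroup 2)) *
      tensorPow ρ (QuaternionGroup 2)).trace = (ρ ^ 2).trace ^ 4 :=
    trace_permOp_mulLeft ρ _ 2 4 (orderOf_eq_prime (by decide) (by decide)) hcard
  have h4 (g : QuaternionGroup 2) (hg : g ^ 2 ≠ 1) :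
      (permOp d (Equiv.mulLeft g) * tensorPow ρ (QuaternionGroup 2)).trace =
        (ρ ^ 4).trace ^ 2 := by
    refine trace_permOp_mulLeft ρ _ 4 2 (orderOf_eq_prime_pow (p := 2) (n := 1) hg ?_) hcard
    revert g
    decide
  have huniv : (Finset.univ : Finset (QuaternionGroup 2)) =
      {.a 0, .a 1, .a 2, .a 3, .xa 0, .xa 1, .xa 2, .xa 3} := by decide
  congr 1
  rw [huniv]
  repeat rw [Finset.sum_insert (by decide)]
  rw [Finset.sum_singleton, h1, h2, h4 (.a 1) (by decide), h4 (.a 3) (by decide),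
    h4 (.xa 0) (by decide), h4 (.xa 1) (by decide), h4 (.xa 2) (by decide),
    h4 (.xa 3) (by decide)]
  ring
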